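/- arXiv:1909.09255 — 4 statements merged into one kernel-verified Lean document; each statement's English description precedes it below -/
import Mathlib

section
/- Let n ≥ 2 and let M = (m_{ij}) be an n×n complex matrix all of whose entries in the first row and first column are nonzero. Then there exist diagonal unitary matrices D_L = diag(e^{iφ_1},…,e^{iφ_n}) and D_R = diag(1, e^{iψ_1},…,e^{iψ_{n-1}}) (φ_i, ψ_i real) such that every entry of D_L · M · D_R is a real number, if and only if Im(m_{11} · m_{kl} · conj(m_{1l}) · conj(m_{k1})) = 0 for all k, l ∈ {2, …, n}. -/
/-!
The numbers `m_{ij} m_{kl} conj(m_{il}) conj(m_{kj})` do not change under rephasing, because every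
phase occurs in them once together with its conjugate. One can always choose the phases so that
the first row and the first column become real. If these entries are moreover nonzero, the number
formed with `i = j = 1` is a nonzero real multiple of the rephased `m_{kl}`, so one is real exactly
when the other is.
-/

section Quartet

variable {m n R : Type*}

/-- The quartet rephasing invariant `m_{ij} m_{kl} conj(m_{il}) conj(m_{kj})`, whose imaginary part
is, up to sign, the Jarlskog invariant of the rows `i, k` and columns `j, l`. -/
def quartet [Mul R] [Star R] (M : Matrix m n R) (i k : m) (j l : n) : R :=
  M i j * M k l * star (M i l) * star (M k j)

/-- The rephasing `D_L M D_R` of `M`, where `u` and `v` list the diagonal entries of `D_L` and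
`D_R`. Being written entrywise, it makes sense for infinite index types too. -/
def rephase [Monoid R] [StarMul R] (u : m → unitary R) (v : n → unitary R) (M : Matrix m n R) :
    Matrix m n R :=
  .of fun i j => u i * M i j * v j

lemma diagonal_mul_mul_diagonal_eq_rephase [Semiring R] [StarMul R] [Fintype m] [Fintype n]
    [DecidableEq m] [DecidableEq n] (u : m → unitary R) (v : n → unitary R) (M : Matrix m n R) :
    Matrix.diagonal (fun i => (u i : R)) * M * Matrix.diagonal (fun j => (v j : R)) =
      rephase u v M := by
  ext i j
  rw [Matrix.mul_diagonal, Matrix.diagonal_mul, rephase, Matrix.of_apply]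

lemma quartet_rephase [CommMonoid R] [StarMul R] (u : m → unitary R) (v : n → unitary R)
    (M : Matrix m n R) (i k : m) (j l : n) :
    quartet (rephase u v M) i k j l = quartet M i k j l := by
  calc
    quartet (rephase u v M) i k j l =
        quartet M i k j l * (u i * star (u i : R)) * (u k * star (u k : R)) *
          (v j * star (v j : R)) * (v l * star (v l : R)) := by
      simp only [quartet, rephase, Matrix.of_apply, star_mul]
      ac_rfl
    _ = quartet M i k j l := by
      simp only [Unitary.mul_star_self_of_mem (SetLike.coe_mem _), mul_one]

lemma isSelfAdjoint_quartet [CommSemigroup R] [StarMul R] {M : Matrix m n R} {i k : m} {j l : n}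
    (hij : IsSelfAdjoint (M i j)) (hkl : IsSelfAdjoint (M k l)) (hil : IsSelfAdjoint (M i l))
    (hkj : IsSelfAdjoint (M k j)) : IsSelfAdjoint (quartet M i k j l) :=
  ((hij.mul hkl).mul (IsSelfAdjoint.star_iff.2 hil)).mul (IsSelfAdjoint.star_iff.2 hkj)

lemma isSelfAdjoint_of_isSelfAdjoint_mul_left [CommMonoidWithZero R] [IsLeftCancelMulZero R]
    [StarMul R] {c x : R} (hc : IsSelfAdjoint c) (hc₀ : c ≠ 0) (hcx : IsSelfAdjoint (c * x)) :
    IsSelfAdjoint x := by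
  refine mul_left_cancel₀ hc₀ ?_
  rw [← hcx.star_eq, star_mul', hc.star_eq]

lemma isSelfAdjoint_of_isSelfAdjoint_quartet [CommMonoidWithZero R] [IsLeftCancelMulZero R]
    [StarMul R] {M : Matrix m n R} {i k : m} {j l : n} (hij : IsSelfAdjoint (M i j))
    (hil : IsSelfAdjoint (M i l)) (hkj : IsSelfAdjoint (M k j)) (hij₀ : M i j ≠ 0)
    (hil₀ : M i l ≠ 0) (hkj₀ : M k j ≠ 0) (h : IsSelfAdjoint (quartet M i k j l)) :
    IsSelfAdjoint (M k l) := by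
  refine isSelfAdjoint_of_isSelfAdjoint_mul_left ((hij.mul hil).mul hkj)
    (mul_ne_zero (mul_ne_zero hij₀ hil₀) hkj₀) ?_
  have quartet_eq : quartet M i k j l = M i j * M i l * M k j * M k l := by
    rw [quartet, hil.star_eq, hkj.star_eq]
    ac_rfl
  rwa [← quartet_eq]

lemma isSelfAdjoint_apply_of_forall_quartet [CommMonoidWithZero R] [IsLeftCancelMulZero R]
    [StarMul R] {M : Matrix m n R} {i₀ : m} {j₀ : n} (hrow : ∀ j, IsSelfAdjoint (M i₀ j))
    (hcol : ∀ i, IsSelfAdjoint (M i j₀)) (hrow₀ : ∀ j, M i₀ j ≠ 0) (hcol₀ : ∀ i, M i j₀ ≠ 0)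
    (h : ∀ k l, k ≠ i₀ → l ≠ j₀ → IsSelfAdjoint (quartet M i₀ k j₀ l)) (k : m) (l : n) :
    IsSelfAdjoint (M k l) := by
  rcases eq_or_ne k i₀ with rfl | hk
  · exact hrow l
  rcases eq_or_ne l j₀ with rfl | hl
  · exact hcol k
  exact isSelfAdjoint_of_isSelfAdjoint_quartet (hrow j₀) (hrow l) (hcol k) (hrow₀ j₀) (hrow₀ l)
    (hcol₀ k) (h k l hk hl)

end Quartet

section Phase

variable {m n : Type*}

lemma exp_ofReal_mul_I_mem_unitary (θ : ℝ) : Complex.exp (θ * Complex.I) ∈ unitary ℂ := by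
  rw [Unitary.mem_iff_star_mul_self, ← starRingEnd_apply, Complex.conj_mul',
    Complex.norm_exp_ofReal_mul_I, Complex.ofReal_one, one_pow]

/-- The rephasing factor `e^{iθ}`, bundled as a unitary element. -/
noncomputable def phase (θ : ℝ) : unitary ℂ :=
  ⟨Complex.exp (θ * Complex.I), exp_ofReal_mul_I_mem_unitary θ⟩

lemma coe_phase (θ : ℝ) : (phase θ : ℂ) = Complex.exp (θ * Complex.I) :=
  rfl

lemma coe_phase_zero : (phase 0 : ℂ) = 1 := by
  rw [coe_phase, Complex.ofReal_zero, zero_mul, Complex.exp_zero]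

lemma coe_phase_add (θ η : ℝ) : (phase (θ + η) : ℂ) = phase θ * phase η := by
  simp only [coe_phase, Complex.ofReal_add, add_mul, Complex.exp_add]

lemma phase_neg_arg_mul_self (z : ℂ) : phase (-z.arg) * z = ‖z‖ := by
  calc
    phase (-z.arg) * z = phase (-z.arg) * (‖z‖ * phase z.arg) := by
      rw [coe_phase z.arg, Complex.norm_mul_exp_arg_mul_I]
    _ = ‖z‖ * phase (-z.arg + z.arg) := by rw [coe_phase_add, mul_left_comm]
    _ = ‖z‖ := by rw [neg_add_cancel, coe_phase_zero, mul_one]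

lemma exists_rephase_row_col_eq_norm (M : Matrix m n ℂ) (i₀ : m) (j₀ : n) :
    ∃ (φ : m → ℝ) (ψ : n → ℝ), ψ j₀ = 0 ∧
      (∀ j, rephase (phase ∘ φ) (phase ∘ ψ) M i₀ j = ‖M i₀ j‖) ∧
      ∀ i, rephase (phase ∘ φ) (phase ∘ ψ) M i j₀ = ‖M i j₀‖ := by
  refine ⟨fun i => -(M i j₀).arg, fun j => (M i₀ j₀).arg + -(M i₀ j).arg, add_neg_cancel _,
    fun j => ?_, fun i => ?_⟩
  · calc
      (phase (-(M i₀ j₀).arg) * M i₀ j * phase ((M i₀ j₀).arg + -(M i₀ j).arg) : ℂ) =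
          phase (-(M i₀ j₀).arg + (M i₀ j₀).arg) * (phase (-(M i₀ j).arg) * M i₀ j) := by
        rw [coe_phase_add, coe_phase_add]
        ring
      _ = ‖M i₀ j‖ := by
        rw [neg_add_cancel, coe_phase_zero, one_mul, phase_neg_arg_mul_self]
  · calc
      (phase (-(M i j₀).arg) * M i j₀ * phase ((M i₀ j₀).arg + -(M i₀ j₀).arg) : ℂ) =
          phase (-(M i j₀).arg) * M i j₀ := by rw [add_neg_cancel, coe_phase_zero, mul_one]
      _ = ‖M i j₀‖ := phase_neg_arg_mul_self _

end Phase

theorem jarlskog_rephasing_to_real_entries_general {m n : Type*} (M : Matrix m n ℂ) (i₀ : m)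
    (j₀ : n) (hrow : ∀ j, M i₀ j ≠ 0) (hcol : ∀ i, M i j₀ ≠ 0) :
    (∃ (φ : m → ℝ) (ψ : n → ℝ), ψ j₀ = 0 ∧
      ∀ i j, (rephase (phase ∘ φ) (phase ∘ ψ) M i j).im = 0) ↔
    ∀ k l, k ≠ i₀ → l ≠ j₀ → (quartet M i₀ k j₀ l).im = 0 := by
  have im_eq_zero_iff (z : ℂ) : z.im = 0 ↔ IsSelfAdjoint z := Complex.conj_eq_iff_im.symm
  simp only [im_eq_zero_iff]
  constructor
  · rintro ⟨φ, ψ, -, hreal⟩ k l - -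
    rw [← quartet_rephase (phase ∘ φ) (phase ∘ ψ)]
    exact isSelfAdjoint_quartet (hreal _ _) (hreal _ _) (hreal _ _) (hreal _ _)
  · intro hquartet
    obtain ⟨φ, ψ, hψ, row_eq, col_eq⟩ := exists_rephase_row_col_eq_norm M i₀ j₀
    refine ⟨φ, ψ, hψ, isSelfAdjoint_apply_of_forall_quartet (i₀ := i₀) (j₀ := j₀) ?_ ?_ ?_ ?_ ?_⟩
    · exact fun j => row_eq j ▸ Complex.conj_ofReal _
    · exact fun i => col_eq i ▸ Complex.conj_ofReal _
    · simpa [row_eq] using hrow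
    · simpa [col_eq] using hcol
    · simpa only [quartet_rephase] using hquartet

/-- An `n × n` complex matrix `M` (with `n ≥ 2`) whose first-row
and first-column entries are all nonzero can be rephased to a matrix with all real entries
by `D_L = diag(e^{iφ₁},…,e^{iφₙ})` and `D_R = diag(1, e^{iψ₁},…,e^{iψ_{n-1}})`
if and only if `Im(m₁₁ m_{kl} m̄_{1l} m̄_{k1}) = 0` for all `k, l ∈ {2,…,n}`. -/
theorem jarlskog_rephasing_to_real_entries
    (n : ℕ) (hn : 2 ≤ n) (M : Matrix (Fin n) (Fin n) ℂ)
    (hrow : ∀ j : Fin n, M ⟨0, by omega⟩ j ≠ 0)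
    (hcol : ∀ i : Fin n, M i ⟨0, by omega⟩ ≠ 0) :
    (∃ φ ψ : Fin n → ℝ, ψ ⟨0, by omega⟩ = 0 ∧
      ∀ i j : Fin n,
        ((Matrix.diagonal (fun i => Complex.exp ((φ i : ℂ) * Complex.I)) * M *
          Matrix.diagonal (fun j => Complex.exp ((ψ j : ℂ) * Complex.I))) i j).im = 0) ↔
    (∀ k l : Fin n, k ≠ ⟨0, by omega⟩ → l ≠ ⟨0, by omega⟩ →
      (M ⟨0, by omega⟩ ⟨0, by omega⟩ * M k l *
        (starRingEnd ℂ) (M ⟨0, by omega⟩ l) *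
        (starRingEnd ℂ) (M k ⟨0, by omega⟩)).im = 0) := by
  simpa only [← diagonal_mul_mul_diagonal_eq_rephase, Function.comp_apply, coe_phase] using!
    jarlskog_rephasing_to_real_entries_general M ⟨0, by omega⟩ ⟨0, by omega⟩ hrow hcol
end

section
/- Let α_{12}, α_{13}, α_{14}, α_{23}, α_{24}, α_{34}, β_{13}, β_{14}, β_{24} be real numbers, write c_{ij} = cos α_{ij}, s_{ij} = sin α_{ij}, and assume all twelve quantities c_{12}, c_{13}, c_{14}, c_{23}, c_{24}, c_{34}, s_{12}, s_{13}, s_{14}, s_{23}, s_{24}, s_{34} are nonzero. Define J₁ = −sin β_{14} · c_{13} c_{14}² c_{24} s_{13} s_{14} s_{23} s_{24}; J₂ = cos β_{14} sin β_{13} · c_{12} c_{13} c_{14}² c_{23} c_{24} s_{12} s_{14} s_{24} + cos β_{13} sin β_{14} · c_{12} c_{13} c_{14}² c_{23} c_{24} s_{12} s_{14} s_{24} + sin β_{14} · c_{12}² c_{13} c_{14}² c_{24} s_{13} s_{14} s_{23} s_{24}; and J₃ = −sin β_{24} · c_{13} c_{14}² c_{23} c_{24} c_{34} s_{13} s_{14}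 s_{34} + sin β_{14} · c_{13} c_{14}² c_{24} s_{13} s_{14} s_{23} s_{24} s_{34}². Then (J₁ = 0 and J₂ = 0 and J₃ = 0) if and only if (sin β_{13} = 0 and sin β_{14} = 0 and sin β_{24} = 0). -/
open Real

/-!
Once `sin β₁₄ = 0`, which `J₁` detects alone, the extra terms of `J₂` and `J₃` drop out. The two
leading terms of `J₂` are a multiple of `sin (β₁₃ + β₁₄)`, and a translation by a zero `β₁₄` of the
sine changes the sine only by a sign, so `J₂` detects `sin β₁₃`; `J₃` detects `sin β₂₄`.
-/

theorem sin_add_eq_zero_iff_of_sin_eq_zero {x y : ℝ} (hy : sin y = 0) :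
    sin (x + y) = 0 ↔ sin x = 0 := by
  obtain ⟨n, rfl⟩ := sin_eq_zero_iff.mp hy
  rw [sin_add_int_mul_pi, mul_eq_zero_iff_left (zpow_ne_zero n (neg_ne_zero.mpr one_ne_zero))]

section Jarlskog

variable (α₁₂ α₁₃ α₁₄ α₂₃ α₂₄ α₃₄ β₁₃ β₁₄ β₂₄ : ℝ)

/-- The Jarlskog invariant `J₁ = Im (V₁₁ V₂₂ conj(V₁₂) conj(V₂₁))` of the 4×4 CKM matrix `V`,
encoded by its expression in the mixing angles `αᵢⱼ` and phases `βᵢⱼ`. It detects CP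
violation by `β₁₄`. -/
noncomputable def jarlskog₁ : ℝ :=
  -sin β₁₄ * cos α₁₃ * (cos α₁₄) ^ 2 * cos α₂₄ * sin α₁₃ * sin α₁₄ * sin α₂₃ * sin α₂₄

/-- The Jarlskog invariant `J₂ = Im (V₁₁ V₂₃ conj(V₁₃) conj(V₂₁))` of the 4×4 CKM matrix `V`,
encoded by its expression in the mixing angles `αᵢⱼ` and phases `βᵢⱼ`. When `sin β₁₄ = 0`,
it detects CP violation by `β₁₃`. -/
noncomputable def jarlskog₂ : ℝ :=
  cos β₁₄ * sin β₁₃ * cos α₁₂ * cos α₁₃ * (cos α₁₄) ^ 2 * cos α₂₃ * cos α₂₄ *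
      sin α₁₂ * sin α₁₄ * sin α₂₄ +
    cos β₁₃ * sin β₁₄ * cos α₁₂ * cos α₁₃ * (cos α₁₄) ^ 2 * cos α₂₃ * cos α₂₄ *
      sin α₁₂ * sin α₁₄ * sin α₂₄ +
    sin β₁₄ * (cos α₁₂) ^ 2 * cos α₁₃ * (cos α₁₄) ^ 2 * cos α₂₄ *
      sin α₁₃ * sin α₁₄ * sin α₂₃ * sin α₂₄

/-- The Jarlskog invariant `J₃ = Im (V₁₁ V₃₂ conj(V₁₂) conj(V₃₁))` of the 4×4 CKM matrix `V`,
encoded by its expression in the mixing angles `αᵢⱼ` and phases `βᵢⱼ`. When `sin β₁₄ = 0`,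
it detects CP violation by `β₂₄`. -/
noncomputable def jarlskog₃ : ℝ :=
  -sin β₂₄ * cos α₁₃ * (cos α₁₄) ^ 2 * cos α₂₃ * cos α₂₄ * cos α₃₄ *
      sin α₁₃ * sin α₁₄ * sin α₃₄ +
    sin β₁₄ * cos α₁₃ * (cos α₁₄) ^ 2 * cos α₂₄ *
      sin α₁₃ * sin α₁₄ * sin α₂₃ * sin α₂₄ * (sin α₃₄) ^ 2

theorem jarlskog₂_eq_mul_sin_add :
    jarlskog₂ α₁₂ α₁₃ α₁₄ α₂₃ α₂₄ β₁₃ β₁₄ =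
      cos α₁₂ * cos α₁₃ * cos α₁₄ ^ 2 * cos α₂₃ * cos α₂₄ * sin α₁₂ * sin α₁₄ * sin α₂₄ *
          sin (β₁₃ + β₁₄) +
        cos α₁₂ ^ 2 * cos α₁₃ * cos α₁₄ ^ 2 * cos α₂₄ * sin α₁₃ * sin α₁₄ * sin α₂₃ * sin α₂₄ *
          sin β₁₄ := by
  rw [jarlskog₂, sin_add]
  ring

variable {α₁₂ α₁₃ α₁₄ α₂₃ α₂₄ α₃₄ β₁₃ β₁₄ β₂₄}

theorem jarlskog₁_eq_zero_iff (hc13 : cos α₁₃ ≠ 0) (hc14 : cos α₁₄ ≠ 0) (hc24 : cos α₂₄ ≠ 0)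
    (hs13 : sin α₁₃ ≠ 0) (hs14 : sin α₁₄ ≠ 0) (hs23 : sin α₂₃ ≠ 0) (hs24 : sin α₂₄ ≠ 0) :
    jarlskog₁ α₁₃ α₁₄ α₂₃ α₂₄ β₁₄ = 0 ↔ sin β₁₄ = 0 := by
  simp [jarlskog₁, *]

theorem jarlskog₂_eq_zero_iff_of_sin_eq_zero (hβ14 : sin β₁₄ = 0)
    (hc12 : cos α₁₂ ≠ 0) (hc13 : cos α₁₃ ≠ 0) (hc14 : cos α₁₄ ≠ 0) (hc23 : cos α₂₃ ≠ 0)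
    (hc24 : cos α₂₄ ≠ 0) (hs12 : sin α₁₂ ≠ 0) (hs14 : sin α₁₄ ≠ 0) (hs24 : sin α₂₄ ≠ 0) :
    jarlskog₂ α₁₂ α₁₃ α₁₄ α₂₃ α₂₄ β₁₃ β₁₄ = 0 ↔ sin β₁₃ = 0 := by
  rw [jarlskog₂_eq_mul_sin_add, hβ14, mul_zero, add_zero, mul_eq_zero_iff_left (by positivity),
    sin_add_eq_zero_iff_of_sin_eq_zero hβ14]

theorem jarlskog₃_eq_zero_iff_of_sin_eq_zero (hβ14 : sin β₁₄ = 0)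
    (hc13 : cos α₁₃ ≠ 0) (hc14 : cos α₁₄ ≠ 0) (hc23 : cos α₂₃ ≠ 0) (hc24 : cos α₂₄ ≠ 0)
    (hc34 : cos α₃₄ ≠ 0) (hs13 : sin α₁₃ ≠ 0) (hs14 : sin α₁₄ ≠ 0) (hs34 : sin α₃₄ ≠ 0) :
    jarlskog₃ α₁₃ α₁₄ α₂₃ α₂₄ α₃₄ β₁₄ β₂₄ = 0 ↔ sin β₂₄ = 0 := by
  simp [jarlskog₃, *]

end Jarlskog

/-- **Theorem 3.** For generic mixing angles, the three Jarlskog invariants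
`J₁`, `J₂`, `J₃` of the CKM4 matrix vanish simultaneously iff all three CP phases vanish:
`sin β₁₃ = 0`, `sin β₁₄ = 0` and `sin β₂₄ = 0`. -/
theorem jarlskog_CP_conservation_SM4
    (α₁₂ α₁₃ α₁₄ α₂₃ α₂₄ α₃₄ β₁₃ β₁₄ β₂₄ : ℝ)
    (hc12 : cos α₁₂ ≠ 0) (hc13 : cos α₁₃ ≠ 0) (hc14 : cos α₁₄ ≠ 0)
    (hc23 : cos α₂₃ ≠ 0) (hc24 : cos α₂₄ ≠ 0) (hc34 : cos α₃₄ ≠ 0)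
    (hs12 : sin α₁₂ ≠ 0) (hs13 : sin α₁₃ ≠ 0) (hs14 : sin α₁₄ ≠ 0)
    (hs23 : sin α₂₃ ≠ 0) (hs24 : sin α₂₄ ≠ 0) (hs34 : sin α₃₄ ≠ 0) :
    (-sin β₁₄ * cos α₁₃ * (cos α₁₄) ^ 2 * cos α₂₄ * sin α₁₃ * sin α₁₄ * sin α₂₃ * sin α₂₄ = 0 ∧
      cos β₁₄ * sin β₁₃ * cos α₁₂ * cos α₁₃ * (cos α₁₄) ^ 2 * cos α₂₃ * cos α₂₄ *
          sin α₁₂ * sin α₁₄ * sin α₂₄ +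
        cos β₁₃ * sin β₁₄ * cos α₁₂ * cos α₁₃ * (cos α₁₄) ^ 2 * cos α₂₃ * cos α₂₄ *
          sin α₁₂ * sin α₁₄ * sin α₂₄ +
        sin β₁₄ * (cos α₁₂) ^ 2 * cos α₁₃ * (cos α₁₄) ^ 2 * cos α₂₄ *
          sin α₁₃ * sin α₁₄ * sin α₂₃ * sin α₂₄ = 0 ∧
      -sin β₂₄ * cos α₁₃ * (cos α₁₄) ^ 2 * cos α₂₃ * cos α₂₄ * cos α₃₄ *
          sin α₁₃ * sin α₁₄ * sin α₃₄ +
        sin β₁₄ * cos α₁₃ * (cos α₁₄) ^ 2 * cos α₂₄ *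
          sin α₁₃ * sin α₁₄ * sin α₂₃ * sin α₂₄ * (sin α₃₄) ^ 2 = 0) ↔
    (sin β₁₃ = 0 ∧ sin β₁₄ = 0 ∧ sin β₂₄ = 0) := by
  calc
    _ ↔ jarlskog₁ α₁₃ α₁₄ α₂₃ α₂₄ β₁₄ = 0 ∧ jarlskog₂ α₁₂ α₁₃ α₁₄ α₂₃ α₂₄ β₁₃ β₁₄ = 0 ∧
        jarlskog₃ α₁₃ α₁₄ α₂₃ α₂₄ α₃₄ β₁₄ β₂₄ = 0 := Iff.rfl
    _ ↔ sin β₁₄ = 0 ∧ jarlskog₂ α₁₂ α₁₃ α₁₄ α₂₃ α₂₄ β₁₃ β₁₄ = 0 ∧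
        jarlskog₃ α₁₃ α₁₄ α₂₃ α₂₄ α₃₄ β₁₄ β₂₄ = 0 :=
      and_congr_left' (jarlskog₁_eq_zero_iff hc13 hc14 hc24 hs13 hs14 hs23 hs24)
    _ ↔ sin β₁₄ = 0 ∧ sin β₁₃ = 0 ∧ sin β₂₄ = 0 :=
      and_congr_right fun hβ14 => and_congr
        (jarlskog₂_eq_zero_iff_of_sin_eq_zero hβ14 hc12 hc13 hc14 hc23 hc24 hs12 hs14 hs24)
        (jarlskog₃_eq_zero_iff_of_sin_eq_zero hβ14 hc13 hc14 hc23 hc24 hc34 hs13 hs14 hs34)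
    _ ↔ sin β₁₃ = 0 ∧ sin β₁₄ = 0 ∧ sin β₂₄ = 0 := and_left_comm
end

section
/- Let M = (m_{ij}) be an n×n complex matrix (n ≥ 2) and suppose M = D_L · M̃ · D_R where M̃ is the matrix with entries |m_{ij}|, D_L = diag(e^{iφ_1},…,e^{iφ_n}), and D_R = diag(1, e^{iψ_1},…,e^{iψ_{n-1}}) with φ_i, ψ_i real. Then for all k, l ∈ {2,…,n}, Im(m_{11} · m_{kl} · conj(m_{1l}) · conj(m_{k1})) = 0. -/
/-!
In the product `M i j * M k l * star (M i l) * star (M k j)` each of the rows `i`, `k` and each of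
the columns `j`, `l` occurs once plain and once conjugated. Scaling a row or a column by `c`
therefore multiplies it by the self-adjoint factor `c * star c`, so the product stays self-adjoint
under any diagonal scaling of a matrix with self-adjoint entries.
-/

section Quartet

variable {m n R : Type*}

/-- The quartet of the entries of `M` in the rows `i`, `k` and the columns `j`, `l`, whose
imaginary part is the Jarlskog invariant. The entries on the antidiagonal of the `2 × 2` minor are
the conjugated ones. -/
def jarlskogQuartet [Mul R] [Star R] (M : Matrix m n R) (i k : m) (j l : n) : R :=
  M i j * M k l * star (M i l) * star (M k j)

theorem isSelfAdjoint_jarlskogQuartet [CommSemigroup R] [StarMul R] {A : Matrix m n R}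
    (hA : ∀ i j, IsSelfAdjoint (A i j)) (i k : m) (j l : n) :
    IsSelfAdjoint (jarlskogQuartet A i k j l) :=
  (((hA i j).mul (hA k l)).mul (IsSelfAdjoint.star_iff.mpr (hA i l))).mul
    (IsSelfAdjoint.star_iff.mpr (hA k j))

variable [Fintype m] [Fintype n] [DecidableEq m] [DecidableEq n] [CommSemiring R] [StarMul R]

theorem jarlskogQuartet_diagonal_mul_mul_diagonal (a : m → R) (A : Matrix m n R) (b : n → R)
    (i k : m) (j l : n) :
    jarlskogQuartet (Matrix.diagonal a * A * Matrix.diagonal b) i k j l =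
      (a i * star (a i)) * (a k * star (a k)) * (b j * star (b j)) * (b l * star (b l)) *
        jarlskogQuartet A i k j l := by
  simp only [jarlskogQuartet, Matrix.mul_diagonal, Matrix.diagonal_mul, star_mul']
  ring

theorem jarlskog_rephasing_forward_general {M A : Matrix m n R} {a : m → R} {b : n → R}
    (hM : M = Matrix.diagonal a * A * Matrix.diagonal b) (hA : ∀ i j, IsSelfAdjoint (A i j))
    (i k : m) (j l : n) : IsSelfAdjoint (jarlskogQuartet M i k j l) := by
  have scaling_factor : IsSelfAdjoint
      ((a i * star (a i)) * (a k * star (a k)) * (b j * star (b j)) * (b l * star (b l))) :=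
    (((IsSelfAdjoint.mul_star_self _).mul (.mul_star_self _)).mul (.mul_star_self _)).mul
      (.mul_star_self _)
  rw [hM, jarlskogQuartet_diagonal_mul_mul_diagonal]
  exact scaling_factor.mul (isSelfAdjoint_jarlskogQuartet hA i k j l)

end Quartet

/-- **forward implication of Theorem 1.** If an `n × n` complex matrix `M`
(`n ≥ 2`) factors as `M = D_L • M̃ • D_R` with `M̃` the matrix of moduli `|m_{ij}|`,
`D_L = diag(e^{iφ₁},…,e^{iφₙ})` and `D_R = diag(1, e^{iψ₁},…,e^{iψ_{n-1}})`, then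
`Im(m₁₁ m_{kl} m̄_{1l} m̄_{k1}) = 0` for all `k, l ∈ {2,…,n}`. -/
theorem jarlskog_rephasing_forward
    (n : ℕ) (hn : 2 ≤ n) (M : Matrix (Fin n) (Fin n) ℂ)
    (φ ψ : Fin n → ℝ) (hψ : ψ ⟨0, by omega⟩ = 0)
    (hM : M = Matrix.diagonal (fun i => Complex.exp ((φ i : ℂ) * Complex.I)) *
        (Matrix.of fun i j => (‖M i j‖ : ℂ)) *
        Matrix.diagonal (fun j => Complex.exp ((ψ j : ℂ) * Complex.I))) :
    ∀ k l : Fin n, k ≠ ⟨0, by omega⟩ → l ≠ ⟨0, by omega⟩ →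
      (M ⟨0, by omega⟩ ⟨0, by omega⟩ * M k l *
        (starRingEnd ℂ) (M ⟨0, by omega⟩ l) *
        (starRingEnd ℂ) (M k ⟨0, by omega⟩)).im = 0 :=
  fun k l _ _ ↦ Complex.conj_eq_iff_im.mp <|
    jarlskog_rephasing_forward_general hM (fun _ _ ↦ Complex.conj_ofReal _) _ k _ l
end

section
/- Let n ≥ 2 and let M = (m_{ij}) be an n×n complex matrix all of whose entries in the first row and first column are nonzero, and suppose that for all k, l ∈ {2,…,n} there exists ε_{kl} ∈ {0, π} such that arg(m_{11}) + arg(m_{kl}) − arg(m_{1l}) − arg(m_{k1}) ≡ ε_{kl} (mod 2π) whenever m_{kl} ≠ 0. Then, setting φ_k = arg(m_{k1}) for k = 1,…,n and ψ_{l-1} = arg(m_{1l}) − arg(m_{11}) for l = 2,…,n, D_L = diag(e^{iφ_1},…,e^{iφ_n}) and D_R = diag(1, e^{iψ_1},…,e^{iψ_{n-1}}), the matrix conj(D_L) · M · conj(D_R) has all real entries. -/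
/-!
Write `M i j = ‖M i j‖ * exp (θ i j * I)`. Multiplying by `conj D_L` on the left and `conj D_R` on
the right subtracts `φ i + ψ j` from the phase `θ i j`, so the new entry has imaginary part
`‖M i j‖ * sin (θ i j - φ i - ψ j)`. For phases read off the pivot column and the pivot row, the
new phase is `θ i₀ j₀ + θ i j - θ i₀ j - θ i j₀`: it vanishes on the pivot row and column, and
everywhere else it is the phase that the hypothesis restricts to `{0, π}` modulo `2π`.
-/

open scoped ComplexConjugate

section ConjPhaseDiagonal

variable {m n : Type*} [DecidableEq m] [DecidableEq n]

/-- The matrix `conj D` for `D = diag (exp (i φ_k))`, used to rephase rows or columns. Conjugation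
is applied to each diagonal entry, rather than absorbed into the sign of the exponent. -/
noncomputable def conjPhaseDiagonal (φ : m → ℝ) : Matrix m m ℂ :=
  Matrix.diagonal fun k => conj (Complex.exp (φ k * Complex.I))

theorem conj_exp_mul_exp_mul_conj_exp (a b t : ℝ) :
    conj (Complex.exp (a * Complex.I)) * Complex.exp (t * Complex.I) *
        conj (Complex.exp (b * Complex.I)) =
      Complex.exp ((t - a - b : ℝ) * Complex.I) := by
  simp only [← Complex.exp_conj, map_mul, Complex.conj_ofReal, Complex.conj_I, ← Complex.exp_add]
  congr 1
  push_cast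
  ring

variable [Fintype m] [Fintype n] {M : Matrix m n ℂ}

theorem conjPhaseDiagonal_mul_mul_conjPhaseDiagonal_apply (φ : m → ℝ) (ψ : n → ℝ) {i : m} {j : n}
    {t : ℝ} (hM : M i j = ‖M i j‖ * Complex.exp (t * Complex.I)) :
    (conjPhaseDiagonal φ * M * conjPhaseDiagonal ψ) i j =
      ‖M i j‖ * Complex.exp ((t - φ i - ψ j : ℝ) * Complex.I) := by
  rw [conjPhaseDiagonal, conjPhaseDiagonal, Matrix.mul_diagonal, Matrix.diagonal_mul,
    ← conj_exp_mul_exp_mul_conj_exp]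
  nth_rw 1 [hM]
  ring

theorem im_conjPhaseDiagonal_mul_mul_conjPhaseDiagonal_eq_zero_iff (φ : m → ℝ) (ψ : n → ℝ)
    {i : m} {j : n} {t : ℝ} (hM : M i j = ‖M i j‖ * Complex.exp (t * Complex.I)) :
    ((conjPhaseDiagonal φ * M * conjPhaseDiagonal ψ) i j).im = 0 ↔
      (M i j ≠ 0 → ((t - φ i - ψ j : ℝ) : Real.Angle) = 0 ∨
        ((t - φ i - ψ j : ℝ) : Real.Angle) = Real.pi) := by
  rw [conjPhaseDiagonal_mul_mul_conjPhaseDiagonal_apply φ ψ hM, Complex.im_ofReal_mul,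
    Complex.exp_ofReal_mul_I_im, mul_eq_zero, norm_eq_zero, ← Real.Angle.sin_coe,
    Real.Angle.sin_eq_zero_iff, or_iff_not_imp_left]

/-- The phases `θ` need not be principal arguments, and are arbitrary at zero entries of `M`. -/
theorem jarlskog_rephasing_reverse_construction_general {θ : m → n → ℝ} (i₀ : m) (j₀ : n)
    (hθ : ∀ i j, M i j = ‖M i j‖ * Complex.exp (θ i j * Complex.I))
    (hquartet : ∀ k l, k ≠ i₀ → l ≠ j₀ → M k l ≠ 0 →
      ((θ i₀ j₀ + θ k l - θ i₀ l - θ k j₀ : ℝ) : Real.Angle) = 0 ∨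
        ((θ i₀ j₀ + θ k l - θ i₀ l - θ k j₀ : ℝ) : Real.Angle) = Real.pi)
    (i : m) (j : n) :
    ((conjPhaseDiagonal (fun k => θ k j₀) * M *
      conjPhaseDiagonal (fun l => θ i₀ l - θ i₀ j₀)) i j).im = 0 := by
  rw [im_conjPhaseDiagonal_mul_mul_conjPhaseDiagonal_eq_zero_iff _ _ (hθ i j)]
  intro hij
  have phase_eq : θ i j - θ i j₀ - (θ i₀ j - θ i₀ j₀) =
      θ i₀ j₀ + θ i j - θ i₀ j - θ i j₀ := by ring
  rw [phase_eq]
  rcases eq_or_ne i i₀ with rfl | hi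
  · left
    simp
  rcases eq_or_ne j j₀ with rfl | hj
  · left
    simp
  exact hquartet i j hi hj hij

end ConjPhaseDiagonal

theorem angle_coe_eq_zero_or_pi_of_eq_add {x ε : ℝ} {t : ℤ} (hε : ε = 0 ∨ ε = Real.pi)
    (hx : x = ε + 2 * Real.pi * t) : (x : Real.Angle) = 0 ∨ (x : Real.Angle) = Real.pi := by
  have hxε : (x : Real.Angle) = ε :=
    Real.Angle.angle_eq_iff_two_pi_dvd_sub.2 ⟨t, sub_eq_iff_eq_add'.2 hx⟩
  rcases hε with rfl | rfl
  · exact .inl hxε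
  · exact .inr hxε

/-- **reverse implication of Theorem 1, explicit construction.**
Let `M` be an `n × n` complex matrix (`n ≥ 2`) with nonzero first-row and first-column
entries, such that for all `k, l ∈ {2,…,n}` there is `ε_{kl} ∈ {0, π}` with
`arg m₁₁ + arg m_{kl} − arg m_{1l} − arg m_{k1} ≡ ε_{kl} (mod 2π)` whenever `m_{kl} ≠ 0`.
Setting `φ_k = arg m_{k1}` and `ψ_{l-1} = arg m_{1l} − arg m₁₁` (so the first diagonal
entry of `D_R` equals `1`), the matrix `conj(D_L) ⬝ M ⬝ conj(D_R)` has all real entries. -/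
theorem jarlskog_rephasing_reverse_construction
    (n : ℕ) (hn : 2 ≤ n) (M : Matrix (Fin n) (Fin n) ℂ)
    (hrow : ∀ j : Fin n, M ⟨0, by omega⟩ j ≠ 0)
    (hcol : ∀ i : Fin n, M i ⟨0, by omega⟩ ≠ 0)
    (harg : ∀ k l : Fin n, k ≠ ⟨0, by omega⟩ → l ≠ ⟨0, by omega⟩ →
      ∃ ε : ℝ, (ε = 0 ∨ ε = Real.pi) ∧
        (M k l ≠ 0 → ∃ t : ℤ,
          Complex.arg (M ⟨0, by omega⟩ ⟨0, by omega⟩) + Complex.arg (M k l) -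
            Complex.arg (M ⟨0, by omega⟩ l) - Complex.arg (M k ⟨0, by omega⟩)
            = ε + 2 * Real.pi * t)) :
    ∀ i j : Fin n,
      ((Matrix.diagonal (fun k =>
          (starRingEnd ℂ) (Complex.exp ((Complex.arg (M k ⟨0, by omega⟩) : ℂ) * Complex.I))) *
        M *
        Matrix.diagonal (fun l =>
          (starRingEnd ℂ) (Complex.exp
            (((Complex.arg (M ⟨0, by omega⟩ l) -
               Complex.arg (M ⟨0, by omega⟩ ⟨0, by omega⟩) : ℝ) : ℂ) * Complex.I)))) i j).im
        = 0 :=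
  jarlskog_rephasing_reverse_construction_general (θ := fun i j => Complex.arg (M i j)) _ _
    (fun i j => (Complex.norm_mul_exp_arg_mul_I (M i j)).symm) fun k l hk hl hkl =>
      have ⟨_, hε, hphase⟩ := harg k l hk hl
      have ⟨_, ht⟩ := hphase hkl
      angle_coe_eq_zero_or_pi_of_eq_add hε ht
end
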